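/- (Theorem 2, DP-InstaHide guarantee.) Assume the dataset D has ℓ¹ diameter at most 1, and let ε = T·max{A, B}, where A = log(1 − k/n + exp(1/(kσ))·k/n) and B = log(n/(n − k + k·exp(−1/(kσ)))). Then ε ≤ T/(kσ), and the mechanism releasing T independent draws of the mixup-plus-Laplacian-noise procedure satisfies (ε, 0)-differential privacy with respect to removing x₀: for the T-fold product measures μ_D^{⊗T} and μ_{D'}^{⊗T} of the single-draw laws (Lebesgue measure with densities p and q), every measurable W ⊆ (ℝ^d)^T satisfies μ_D^{⊗T}(W) ≤ e^{ε}·μ_{D'}^{⊗T}(W) and μ_{D'}^{⊗T}(W) ≤ e^{ε}·μ_D^{⊗T}(W). -/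

import Mathlib

open Finset MeasureTheory

/-- The d-dimensional isotropic Laplacian density with scale σ. -/
noncomputable def laplacianDensity (d : ℕ) (σ : ℝ) (η : Fin d → ℝ) : ℝ :=
  ((2 * σ) ^ d)⁻¹ * Real.exp (-(∑ i, |η i|) / σ)

/-- The mixup-plus-noise output density of a finite dataset `P`. -/
noncomputable def mixupDensity (d : ℕ) (σ : ℝ) (k : ℕ) (P : Finset (Fin d → ℝ))
    (z : Fin d → ℝ) : ℝ :=
  ((P.card.choose k : ℝ))⁻¹ *
    ∑ S ∈ P.powersetCard k, laplacianDensity d σ (z - (k : ℝ)⁻¹ • ∑ x ∈ S, x)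

/-- The law of a single draw of the mixup-plus-Laplacian-noise mechanism on `P`:
Lebesgue measure with density `p_P`. -/
noncomputable def mixupLaw (d : ℕ) (σ : ℝ) (k : ℕ) (P : Finset (Fin d → ℝ)) :
    Measure (Fin d → ℝ) :=
  volume.withDensity fun z => ENNReal.ofReal (mixupDensity d σ k P z)

open scoped BigOperators ENNReal

/-!
Split the average `p` of the components over the `k`-subsets of `D` according to whether the subset
contains `x₀`: the subsets avoiding `x₀` average to `q`, so `p = (1 - k/n) q + (k/n) b` with `b` the
average over the subsets containing `x₀`. A uniform `k`-subset of `D \ {x₀}` is obtained from a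
uniform `k`-subset containing `x₀` by swapping `x₀` for a uniform new point. Such a swap moves the
mean by at most `1/k` in `ℓ¹`, hence changes the Laplacian component by a factor between
`exp (-1/(kσ))` and `exp (1/(kσ))`. So `b` lies within these factors of `q`, which bounds `p / q`
on both sides, and pointwise density bounds tensorize.
-/

section SubsetAverages

variable {α : Type*} [DecidableEq α] {s : Finset α} {x : α} {k : ℕ}

theorem sum_powersetCard_succ_sum_mem {M : Type*} [AddCommMonoid M] (s : Finset α) (k : ℕ)
    (f : Finset α → α → M) :
    ∑ S ∈ s.powersetCard (k + 1), ∑ y ∈ S, f S y =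
      ∑ S ∈ s.powersetCard k, ∑ y ∈ s \ S, f (insert y S) y := by
  rw [sum_sigma', sum_sigma']
  refine sum_bij' (fun p _ ↦ ⟨p.1.erase p.2, p.2⟩) (fun p _ ↦ ⟨insert p.2 p.1, p.2⟩)
    ?_ ?_ ?_ ?_ ?_ <;> grind [insert_erase, erase_insert]

theorem sum_powersetCard_succ_insert {M : Type*} [AddCommMonoid M] (hx : x ∉ s) (k : ℕ)
    (F : Finset α → M) :
    ∑ S ∈ (insert x s).powersetCard (k + 1), F S =
      ∑ S ∈ s.powersetCard (k + 1), F S + ∑ S ∈ s.powersetCard k, F (insert x S) := by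
  have hnotMem : ∀ S ∈ s.powersetCard k, x ∉ S := fun S hS hxS ↦ hx ((mem_powersetCard.1 hS).1 hxS)
  have hinj : Set.InjOn (insert x) (s.powersetCard k : Set (Finset α)) :=
    Set.LeftInvOn.injOn (f₁' := fun S ↦ S.erase x) fun S hS ↦ erase_insert (hnotMem S hS)
  have hdisj : Disjoint (s.powersetCard (k + 1)) ((s.powersetCard k).image (insert x)) := by
    rw [disjoint_left]
    grind
  rw [powersetCard_succ_insert hx, sum_union hdisj, sum_image hinj]

theorem expect_powersetCard_succ {K : Type*} [Semifield K] [CharZero K] (s : Finset α) (k : ℕ)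
    (F : Finset α → K) :
    𝔼 S ∈ s.powersetCard (k + 1), F S =
      𝔼 S ∈ s.powersetCard k, 𝔼 y ∈ s \ S, F (insert y S) := by
  have hcount : (k + 1 : K) * ∑ S ∈ s.powersetCard (k + 1), F S =
      ∑ S ∈ s.powersetCard k, ∑ y ∈ s \ S, F (insert y S) := by
    rw [← sum_powersetCard_succ_sum_mem s k fun S _ ↦ F S, mul_sum]
    refine sum_congr rfl fun S hS ↦ ?_
    simp [(mem_powersetCard.1 hS).2]
  have hinner : ∀ S ∈ s.powersetCard k, 𝔼 y ∈ s \ S, F (insert y S) =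
      (∑ y ∈ s \ S, F (insert y S)) / (#s - k : ℕ) := fun S hS ↦ by
    obtain ⟨hSs, hSk⟩ := mem_powersetCard.1 hS
    rw [expect_eq_sum_div_card, card_sdiff_of_subset hSs, hSk]
  have hchoose : (k + 1) * ((#s).choose (k + 1) : K) = (#s - k : ℕ) * (#s).choose k := by
    rw [mul_comm, mul_comm (Nat.cast (#s - k))]
    exact_mod_cast Nat.choose_succ_right_eq (#s) k
  rw [expect_congr rfl hinner]
  simp only [expect_eq_sum_div_card, card_powersetCard, ← sum_div, ← hcount]
  rw [div_div, ← hchoose, mul_div_mul_left _ _ (Nat.cast_add_one_ne_zero k)]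

theorem expect_powersetCard_succ_insert {K : Type*} [Field K] [CharZero K] (hx : x ∉ s)
    (hk : k < #s) (F : Finset α → K) :
    𝔼 S ∈ (insert x s).powersetCard (k + 1), F S =
      (1 - (k + 1 : ℕ) / (#s + 1 : ℕ)) * 𝔼 S ∈ s.powersetCard (k + 1), F S +
        (k + 1 : ℕ) / (#s + 1 : ℕ) * 𝔼 S ∈ s.powersetCard k, F (insert x S) := by
  have hC : ∀ {m j : ℕ}, j ≤ m → (m.choose j : K) ≠ 0 := fun h ↦ mod_cast (Nat.choose_pos h).ne'
  have hs : (#s + 1 : K) ≠ 0 := Nat.cast_add_one_ne_zero _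
  have hweight_avoiding : (1 - (k + 1) / (#s + 1)) / ((#s).choose (k + 1) : K) =
      1 / (#s + 1).choose (k + 1) := by
    have hchoose : ((#s).choose (k + 1) : K) * (#s + 1) = (#s + 1).choose (k + 1) * (#s - k) := by
      rw [← Nat.cast_sub hk.le]
      exact_mod_cast Nat.add_sub_add_right (#s) 1 k ▸ Nat.choose_mul_succ_eq (#s) (k + 1)
    rw [one_sub_div hs, div_div, div_eq_div_iff (mul_ne_zero hs (hC hk)) (hC (by lia))]
    linear_combination -hchoose
  have hweight_containing : (k + 1) / (#s + 1) / ((#s).choose k : K) =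
      1 / (#s + 1).choose (k + 1) := by
    have hchoose : (#s + 1) * ((#s).choose k : K) = (#s + 1).choose (k + 1) * (k + 1) := mod_cast
      Nat.add_one_mul_choose_eq (#s) k
    rw [div_div, div_eq_div_iff (mul_ne_zero hs (hC hk.le)) (hC (by lia))]
    linear_combination -hchoose
  simp only [expect_eq_sum_div_card, sum_powersetCard_succ_insert hx, card_powersetCard,
    card_insert_of_notMem hx, Nat.cast_add, Nat.cast_one]
  linear_combination -(∑ S ∈ s.powersetCard (k + 1), F S) * hweight_avoiding -
    (∑ S ∈ s.powersetCard k, F (insert x S)) * hweight_containing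

end SubsetAverages

section MixingFactor

/-- The convex combination `(1 - k/n) + (k/n) c`: the factor relating the averages of a function
over the `k`-subsets of an `n`-set with and without a given point, when exchanging that point for
another one changes the function by the factor `c`. In the theorem
`A = log (mixingFactor n k (exp (1/(kσ))))` and `B = -log (mixingFactor n k (exp (-1/(kσ))))`. -/
def mixingFactor {K : Type*} [Field K] (n k : ℕ) (c : K) : K := 1 - (k : K) / n + c * ((k : K) / n)

theorem inv_mixingFactor {K : Type*} [Field K] [CharZero K] {n : ℕ} (hn : n ≠ 0)
    (k : ℕ) (c : K) : (mixingFactor n k c)⁻¹ = n / (n - k + k * c) := by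
  have hn' : (n : K) ≠ 0 := mod_cast hn
  rw [mixingFactor, ← inv_div]
  field_simp

variable {K : Type*} [Field K] [LinearOrder K] [IsStrictOrderedRing K] {n k : ℕ} {c : K}

theorem mixingFactor_le (hk : k ≤ n) (hc : 1 ≤ c) : mixingFactor n k c ≤ c := by
  have hw : (k : K) / n ≤ 1 := div_le_one_of_le₀ (mod_cast hk) n.cast_nonneg
  rw [mixingFactor]
  linear_combination mul_nonneg (sub_nonneg.2 hw) (sub_nonneg.2 hc)

theorem le_mixingFactor (hk : k ≤ n) (hc : c ≤ 1) : c ≤ mixingFactor n k c := by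
  have hw : (k : K) / n ≤ 1 := div_le_one_of_le₀ (mod_cast hk) n.cast_nonneg
  rw [mixingFactor]
  linear_combination mul_nonneg (sub_nonneg.2 hw) (sub_nonneg.2 hc)

theorem one_le_mixingFactor (n k : ℕ) (hc : 1 ≤ c) : 1 ≤ mixingFactor n k c := by
  have hw : 0 ≤ (k : K) / n := by positivity
  rw [mixingFactor]
  linear_combination mul_nonneg hw (sub_nonneg.2 hc)

theorem mixingFactor_pos (hk : k ≤ n) (hc : 0 < c) : 0 < mixingFactor n k c := by
  obtain hc₁ | hc₁ := le_total c 1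
  · exact hc.trans_le (le_mixingFactor hk hc₁)
  · exact zero_lt_one.trans_le (one_le_mixingFactor n k hc₁)

theorem log_mixingFactor_exp_le (hk : k ≤ n) {t : ℝ} (ht : 0 ≤ t) :
    Real.log (mixingFactor n k (Real.exp t)) ≤ t :=
  (Real.log_le_iff_le_exp (mixingFactor_pos hk (Real.exp_pos t))).2
    (mixingFactor_le hk (Real.one_le_exp ht))

theorem log_inv_mixingFactor_exp_neg_le (hk : k ≤ n) {t : ℝ} (ht : 0 ≤ t) :
    Real.log (mixingFactor n k (Real.exp (-t)))⁻¹ ≤ t := by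
  rw [Real.log_inv, neg_le, Real.le_log_iff_exp_le (mixingFactor_pos hk (Real.exp_pos _))]
  exact le_mixingFactor hk (Real.exp_le_one_iff.2 (neg_nonpos.2 ht))

end MixingFactor

section SubsetAverageComparison

variable {α : Type*} [DecidableEq α] {K : Type*} [Field K] [LinearOrder K] [IsStrictOrderedRing K]
  {s : Finset α} {x : α} {k : ℕ} {c : K} {F : Finset α → K}

theorem expect_insert_le_mul_expect_powersetCard_succ (hk : k < #s)
    (h : ∀ S ∈ s.powersetCard k, ∀ y ∈ s \ S, F (insert x S) ≤ c * F (insert y S)) :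
    𝔼 S ∈ s.powersetCard k, F (insert x S) ≤ c * 𝔼 S ∈ s.powersetCard (k + 1), F S := by
  rw [expect_powersetCard_succ, mul_expect]
  refine expect_le_expect fun S hS ↦ ?_
  have hne : (s \ S).Nonempty := by
    grind [sdiff_nonempty, card_le_card]
  rw [mul_expect, ← expect_const hne (F (insert x S))]
  exact expect_le_expect (h S hS)

theorem expect_powersetCard_le_mixingFactor_mul_erase (hx : x ∈ s) (hk₀ : k ≠ 0) (hk : k < #s)
    (h : ∀ S ⊆ s.erase x, ∀ y ∈ s.erase x \ S, F (insert x S) ≤ c * F (insert y S)) :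
    𝔼 S ∈ s.powersetCard k, F S ≤
      mixingFactor (#s) k c * 𝔼 S ∈ (s.erase x).powersetCard k, F S := by
  obtain ⟨t, hxt, rfl⟩ : ∃ t, x ∉ t ∧ insert x t = s := ⟨s.erase x, by simp, insert_erase hx⟩
  obtain ⟨j, rfl⟩ := Nat.exists_eq_succ_of_ne_zero hk₀
  rw [erase_insert hxt] at h ⊢
  rw [card_insert_of_notMem hxt] at hk ⊢
  have hswap := expect_insert_le_mul_expect_powersetCard_succ (Nat.lt_of_succ_lt_succ hk)
    fun S hS ↦ h S (mem_powersetCard.1 hS).1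
  rw [expect_powersetCard_succ_insert hxt (Nat.lt_of_succ_lt_succ hk), mixingFactor, add_mul,
    mul_comm c, mul_assoc _ c]
  gcongr

theorem mixingFactor_mul_expect_powersetCard_erase_le (hx : x ∈ s) (hk₀ : k ≠ 0) (hk : k < #s)
    (h : ∀ S ⊆ s.erase x, ∀ y ∈ s.erase x \ S, c * F (insert y S) ≤ F (insert x S)) :
    mixingFactor (#s) k c * 𝔼 S ∈ (s.erase x).powersetCard k, F S ≤
      𝔼 S ∈ s.powersetCard k, F S := by
  have hneg := expect_powersetCard_le_mixingFactor_mul_erase (c := c) (F := -F) hx hk₀ hk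
    fun S hS y hy ↦ by simpa using h S hS y hy
  simpa [expect_neg_distrib] using hneg

end SubsetAverageComparison

section MeasureComparison

theorem withDensity_ofReal_le_smul {X : Type*} [MeasurableSpace X] {μ : Measure X} {f g : X → ℝ}
    {c : ℝ} (hc : 0 ≤ c) (h : ∀ᵐ x ∂μ, f x ≤ c * g x) :
    μ.withDensity (fun x ↦ ENNReal.ofReal (f x)) ≤
      ENNReal.ofReal c • μ.withDensity fun x ↦ ENNReal.ofReal (g x) := by
  rw [← withDensity_smul' _ _ ENNReal.ofReal_ne_top]
  refine withDensity_mono (h.mono fun x hx ↦ ?_)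
  rw [Pi.smul_apply, smul_eq_mul, ← ENNReal.ofReal_mul hc]
  exact ENNReal.ofReal_le_ofReal hx

theorem pi_le_prod_smul_pi {ι : Type*} [Fintype ι] {X : ι → Type*} [∀ i, MeasurableSpace (X i)]
    {μ ν : ∀ i, Measure (X i)} {c : ι → ℝ≥0∞} (hc₀ : ∀ i, c i ≠ 0) (hc : ∀ i, c i ≠ ∞)
    (h : ∀ i, μ i ≤ c i • ν i) : Measure.pi μ ≤ (∏ i, c i) • Measure.pi ν := by
  have hprod₀ : ∏ i, c i ≠ 0 := prod_ne_zero_iff.2 fun i _ ↦ hc₀ i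
  have hprod : ∏ i, c i ≠ ∞ := ENNReal.prod_ne_top fun i _ ↦ hc i
  have houter : (∏ i, c i)⁻¹ • OuterMeasure.pi (fun i ↦ (μ i).toOuterMeasure) ≤
      OuterMeasure.pi fun i ↦ (ν i).toOuterMeasure := by
    refine OuterMeasure.le_pi.2 fun s _ ↦ ?_
    rw [smul_apply, smul_eq_mul, ENNReal.inv_mul_le_iff hprod₀ hprod]
    calc OuterMeasure.pi (fun i ↦ (μ i).toOuterMeasure) (Set.univ.pi s)
        ≤ ∏ i, μ i (s i) := OuterMeasure.pi_pi_le _ _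
      _ ≤ ∏ i, c i * ν i (s i) := prod_le_prod' fun i _ ↦ h i (s i)
      _ = (∏ i, c i) * ∏ i, ν i (s i) := prod_mul_distrib
  refine Measure.le_iff.2 fun s hs ↦ ?_
  rw [Measure.smul_apply, smul_eq_mul, Measure.pi, Measure.pi, toMeasure_apply _ _ hs,
    toMeasure_apply _ _ hs, ← ENNReal.inv_mul_le_iff hprod₀ hprod]
  exact houter s

theorem pi_le_ofReal_exp_smul_pi {ι X : Type*} [Fintype ι] [MeasurableSpace X] {μ ν : Measure X}
    {ε : ℝ} (h : μ ≤ ENNReal.ofReal (Real.exp ε) • ν) :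
    (Measure.pi fun _ : ι ↦ μ) ≤
      ENNReal.ofReal (Real.exp (Fintype.card ι * ε)) • Measure.pi fun _ : ι ↦ ν := by
  have hexp : ENNReal.ofReal (Real.exp (Fintype.card ι * ε)) =
      ∏ _i : ι, ENNReal.ofReal (Real.exp ε) := by
    rw [prod_const, card_univ, ← ENNReal.ofReal_pow (Real.exp_pos ε).le, Real.exp_nat_mul]
  rw [hexp]
  exact pi_le_prod_smul_pi (fun _ ↦ (ENNReal.ofReal_pos.2 (Real.exp_pos ε)).ne')
    (fun _ ↦ ENNReal.ofReal_ne_top) fun _ ↦ h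

end MeasureComparison

section Mixup

variable {d : ℕ} {σ Δ : ℝ} {D : Finset (Fin d → ℝ)} {x₀ : Fin d → ℝ} {k : ℕ}

theorem laplacianDensity_le_exp_mul (hσ : 0 < σ) {u v : Fin d → ℝ} (h : ∑ i, |u i - v i| ≤ Δ) :
    laplacianDensity d σ u ≤ Real.exp (Δ / σ) * laplacianDensity d σ v := by
  have htriangle : ∑ i, |v i| ≤ Δ + ∑ i, |u i| := calc
    ∑ i, |v i| ≤ ∑ i, (|u i - v i| + |u i|) :=
      sum_le_sum fun i _ ↦ by
        linarith [abs_sub_abs_le_abs_sub (v i) (u i), abs_sub_comm (v i) (u i)]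
    _ ≤ Δ + ∑ i, |u i| := by rw [sum_add_distrib]; gcongr
  rw [laplacianDensity, laplacianDensity, mul_left_comm, ← Real.exp_add, ← add_div]
  gcongr
  linarith

theorem laplacianDensity_sub_mean_insert_le (hσ : 0 < σ) (k : ℕ) {S : Finset (Fin d → ℝ)}
    {x y : Fin d → ℝ} (hx : x ∉ S) (hy : y ∉ S) (h : ∑ i, |x i - y i| ≤ Δ) (z : Fin d → ℝ) :
    laplacianDensity d σ (z - (k : ℝ)⁻¹ • ∑ w ∈ insert x S, w) ≤
      Real.exp (Δ / (k * σ)) * laplacianDensity d σ (z - (k : ℝ)⁻¹ • ∑ w ∈ insert y S, w) := by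
  rw [← div_div]
  refine laplacianDensity_le_exp_mul hσ ?_
  rw [sum_insert hx, sum_insert hy]
  have hcoord : ∀ i, (z - (k : ℝ)⁻¹ • (x + ∑ w ∈ S, w)) i -
      (z - (k : ℝ)⁻¹ • (y + ∑ w ∈ S, w)) i = -((x i - y i) / k) := fun i ↦ by
    simp only [Pi.sub_apply, Pi.smul_apply, Pi.add_apply, smul_eq_mul]
    ring
  calc ∑ i, |(z - (k : ℝ)⁻¹ • (x + ∑ w ∈ S, w)) i - (z - (k : ℝ)⁻¹ • (y + ∑ w ∈ S, w)) i|
      = ∑ i, |x i - y i| / k := sum_congr rfl fun i _ ↦ by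
        rw [hcoord i, abs_neg, abs_div, Nat.abs_cast]
    _ ≤ Δ / k := by rw [← sum_div]; gcongr

theorem mixupDensity_nonneg (hσ : 0 < σ) (k : ℕ) (P : Finset (Fin d → ℝ)) (z : Fin d → ℝ) :
    0 ≤ mixupDensity d σ k P z := by
  unfold mixupDensity laplacianDensity
  positivity

theorem mixupDensity_eq_expect (d : ℕ) (σ : ℝ) (k : ℕ) (P : Finset (Fin d → ℝ)) (z : Fin d → ℝ) :
    mixupDensity d σ k P z =
      𝔼 S ∈ P.powersetCard k, laplacianDensity d σ (z - (k : ℝ)⁻¹ • ∑ x ∈ S, x) := by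
  rw [mixupDensity, expect_eq_sum_div_card, card_powersetCard, inv_mul_eq_div]

theorem mixupDensity_le_mixingFactor_mul_erase (hσ : 0 < σ) (hx₀ : x₀ ∈ D)
    (hΔ : ∀ y ∈ D, ∑ i, |x₀ i - y i| ≤ Δ) (hk₀ : k ≠ 0) (hk : k < #D) (z : Fin d → ℝ) :
    mixupDensity d σ k D z ≤
      mixingFactor (#D) k (Real.exp (Δ / (k * σ))) * mixupDensity d σ k (D.erase x₀) z := by
  simp only [mixupDensity_eq_expect]
  refine expect_powersetCard_le_mixingFactor_mul_erase hx₀ hk₀ hk fun S hS y hy ↦ ?_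
  obtain ⟨hyD, hyS⟩ := mem_sdiff.1 hy
  exact laplacianDensity_sub_mean_insert_le hσ k (fun h ↦ notMem_erase x₀ D (hS h)) hyS
    (hΔ y (mem_of_mem_erase hyD)) z

theorem mixingFactor_mul_mixupDensity_erase_le (hσ : 0 < σ) (hx₀ : x₀ ∈ D)
    (hΔ : ∀ y ∈ D, ∑ i, |x₀ i - y i| ≤ Δ) (hk₀ : k ≠ 0) (hk : k < #D) (z : Fin d → ℝ) :
    mixingFactor (#D) k (Real.exp (-(Δ / (k * σ)))) * mixupDensity d σ k (D.erase x₀) z ≤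
      mixupDensity d σ k D z := by
  simp only [mixupDensity_eq_expect]
  refine mixingFactor_mul_expect_powersetCard_erase_le hx₀ hk₀ hk fun S hS y hy ↦ ?_
  obtain ⟨hyD, hyS⟩ := mem_sdiff.1 hy
  have hdist : ∑ i, |y i - x₀ i| ≤ Δ := by
    simpa only [abs_sub_comm] using hΔ y (mem_of_mem_erase hyD)
  rw [Real.exp_neg, inv_mul_le_iff₀ (Real.exp_pos _)]
  exact laplacianDensity_sub_mean_insert_le hσ k hyS (fun h ↦ notMem_erase x₀ D (hS h)) hdist z

theorem mixupLaw_le_ofReal_exp_smul_erase (hσ : 0 < σ) (hx₀ : x₀ ∈ D)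
    (hΔ : ∀ y ∈ D, ∑ i, |x₀ i - y i| ≤ Δ) (hk₀ : k ≠ 0) (hk : k < #D) {ε : ℝ}
    (hε : Real.log (mixingFactor (#D) k (Real.exp (Δ / (k * σ)))) ≤ ε) :
    mixupLaw d σ k D ≤ ENNReal.ofReal (Real.exp ε) • mixupLaw d σ k (D.erase x₀) := by
  rw [Real.log_le_iff_le_exp (mixingFactor_pos hk.le (Real.exp_pos _))] at hε
  refine withDensity_ofReal_le_smul (Real.exp_pos ε).le (ae_of_all _ fun z ↦ ?_)
  exact (mixupDensity_le_mixingFactor_mul_erase hσ hx₀ hΔ hk₀ hk z).trans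
    (mul_le_mul_of_nonneg_right hε (mixupDensity_nonneg hσ ..))

theorem mixupLaw_erase_le_ofReal_exp_smul (hσ : 0 < σ) (hx₀ : x₀ ∈ D)
    (hΔ : ∀ y ∈ D, ∑ i, |x₀ i - y i| ≤ Δ) (hk₀ : k ≠ 0) (hk : k < #D) {ε : ℝ}
    (hε : Real.log (mixingFactor (#D) k (Real.exp (-(Δ / (k * σ)))))⁻¹ ≤ ε) :
    mixupLaw d σ k (D.erase x₀) ≤ ENNReal.ofReal (Real.exp ε) • mixupLaw d σ k D := by
  have hpos := mixingFactor_pos hk.le (Real.exp_pos (-(Δ / (k * σ))))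
  rw [Real.log_le_iff_le_exp (inv_pos.2 hpos)] at hε
  refine withDensity_ofReal_le_smul (Real.exp_pos ε).le (ae_of_all _ fun z ↦ ?_)
  have hle := mixingFactor_mul_mixupDensity_erase_le hσ hx₀ hΔ hk₀ hk z
  exact ((le_inv_mul_iff₀ hpos).2 hle).trans
    (mul_le_mul_of_nonneg_right hε (mixupDensity_nonneg hσ ..))

end Mixup

theorem dp_instahide_guarantee_general {d : ℕ} {σ : ℝ} (hσ : 0 < σ) (T : ℕ)
    {D : Finset (Fin d → ℝ)} {x₀ : Fin d → ℝ} (hx₀ : x₀ ∈ D)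
    {Δ : ℝ} (hΔ : ∀ y ∈ D, ∑ i, |x₀ i - y i| ≤ Δ) {k : ℕ} (hk₀ : k ≠ 0) (hk : k < #D) {A B : ℝ}
    (hA : A = Real.log (1 - (k : ℝ) / #D + Real.exp (Δ / (k * σ)) * ((k : ℝ) / #D)))
    (hB : B = Real.log (#D / ((#D : ℝ) - k + k * Real.exp (-(Δ / (k * σ)))))) :
    T * max A B ≤ T * Δ / (k * σ) ∧
    (Measure.pi fun _ : Fin T ↦ mixupLaw d σ k D) ≤
      ENNReal.ofReal (Real.exp (T * max A B)) •
        (Measure.pi fun _ : Fin T ↦ mixupLaw d σ k (D.erase x₀)) ∧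
    (Measure.pi fun _ : Fin T ↦ mixupLaw d σ k (D.erase x₀)) ≤
      ENNReal.ofReal (Real.exp (T * max A B)) •
        (Measure.pi fun _ : Fin T ↦ mixupLaw d σ k D) := by
  have ht : 0 ≤ Δ / (k * σ) := by
    have : 0 ≤ Δ := (sum_nonneg fun i _ ↦ abs_nonneg _).trans (hΔ x₀ hx₀)
    positivity
  have hB' : B = Real.log (mixingFactor (#D) k (Real.exp (-(Δ / (k * σ)))))⁻¹ := by
    rw [hB, inv_mixingFactor (card_ne_zero_of_mem hx₀)]
  refine ⟨?_, ?_, ?_⟩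
  · rw [mul_div_assoc]
    gcongr
    exact max_le (hA.trans_le (log_mixingFactor_exp_le hk.le ht))
      (hB'.trans_le (log_inv_mixingFactor_exp_neg_le hk.le ht))
  · simpa using pi_le_ofReal_exp_smul_pi (ι := Fin T) <|
      mixupLaw_le_ofReal_exp_smul_erase hσ hx₀ hΔ hk₀ hk (hA.symm.trans_le (le_max_left A B))
  · simpa using pi_le_ofReal_exp_smul_pi (ι := Fin T) <|
      mixupLaw_erase_le_ofReal_exp_smul hσ hx₀ hΔ hk₀ hk (hB'.symm.trans_le (le_max_right A B))

/-- Theorem 2 (DP-InstaHide guarantee): with `ε = T·max{A,B}` where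
`A = log(1 − k/n + exp(1/(kσ))·k/n)` and `B = log(n/(n − k + k·exp(−1/(kσ))))`,
we have `ε ≤ T/(kσ)`, and the mechanism releasing T independent draws of the
mixup-plus-Laplacian-noise procedure satisfies (ε, 0)-differential privacy with
respect to removing `x₀`. -/
theorem dp_instahide_guarantee
    (d : ℕ) (hd : 1 ≤ d) (σ : ℝ) (hσ : 0 < σ) (T : ℕ) (hT : 1 ≤ T)
    (D : Finset (Fin d → ℝ)) (n : ℕ) (hn : D.card = n)
    (hdiam : ∀ x ∈ D, ∀ y ∈ D, ∑ i, |x i - y i| ≤ 1)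
    (x₀ : Fin d → ℝ) (hx₀ : x₀ ∈ D)
    (k : ℕ) (hk1 : 1 ≤ k) (hkn : k ≤ n - 1)
    (A B ε : ℝ)
    (hA : A = Real.log (1 - (k : ℝ) / n + Real.exp (1 / (k * σ)) * ((k : ℝ) / n)))
    (hB : B = Real.log ((n : ℝ) / ((n : ℝ) - k + k * Real.exp (-(1 / (k * σ))))))
    (hε : ε = T * max A B) :
    ε ≤ T / (k * σ) ∧
    ∀ W : Set (Fin T → (Fin d → ℝ)), MeasurableSet W →
      (Measure.pi fun _ : Fin T => mixupLaw d σ k D) W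
          ≤ ENNReal.ofReal (Real.exp ε) *
              (Measure.pi fun _ : Fin T => mixupLaw d σ k (D.erase x₀)) W ∧
      (Measure.pi fun _ : Fin T => mixupLaw d σ k (D.erase x₀)) W
          ≤ ENNReal.ofReal (Real.exp ε) *
              (Measure.pi fun _ : Fin T => mixupLaw d σ k D) W := by
  subst hn hε
  obtain ⟨hε, hp, hq⟩ := dp_instahide_guarantee_general hσ T hx₀ (hdiam x₀ hx₀)
    (Nat.one_le_iff_ne_zero.1 hk1) (by lia) hA hB
  exact ⟨by simpa using hε, fun W _ ↦ ⟨hp W, hq W⟩⟩
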